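/- Let n ≥ 1 and 0 < α < 1. There exists a sequence of centered probability measures dμ_k = f_k dγ on ℝⁿ such that δ(μ_k) → 0, ‖f_k − 1‖_{L¹(dγ)} → 0 with ‖f_k − 1‖_{L¹(dγ)} > 0 for all k, and δ(μ_k) / ‖f_k − 1‖_{L¹(dγ)}^α → 0 as k → ∞. Moreover, for the sequence of measures constructed in the main example with parameters s, t > 0, one has ‖f_k − 1‖_{L¹(dγ)} = O(k^{−t}). -/

import Mathlib

/-!
The examples are the mixtures `μ = (1 - ε) γ + (ε / 2) (γ(· - v) + γ(· + v))` with `‖v‖ = 2 k` and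
`ε = (s / 2) k ^ (-t)`. By symmetry they are centered, and their density is
`f = 1 - ε + ε g` with `g x = exp (-‖v‖² / 2) cosh ⟪v, x⟫` (`mix`, `bump`).

The three components barely overlap, so both functionals split up to errors `O(ε)`:
* the Fisher information is `ε ‖v‖² + O(ε)` (`fisherInfo_le`, `fisherInfo_ge`);
* the entropy is `ε (‖v‖² / 2 + log (ε / 2)) + O(ε)` (`relEnt_ge`, `relEnt_le`).

The quadratic terms cancel in the deficit, leaving `δ = ε log (1 / ε) + O(ε)`
(`exSeq_bounds`), which gives the two stated limits. On the other hand `‖f - 1‖_{L¹}` is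
comparable to `ε` (`mix_L1_le`, `mix_L1_ge`): the lower bound holds because `g ≤ 1 / 2` on the ball
of radius `1 / 2`. Hence `δ` is of order `ε log (1 / ε)`, which is `o(ε ^ α)` for every `α < 1`.

Integrals against `g` are computed by the Cameron–Martin formula `gauss_shift`: for an even
function `h`, `∫ h g dγ = ∫ h (x + v) dγ(x)` (`bump_even`). At `x + v` the density `f` is compared
with its dominant component `(ε / 2) exp (‖v‖² / 2 + ⟪v, x⟫)` (`compFun`), and the relative error is
controlled by the square root `overlapFun` of the ratio, whose Gaussian integral
`√(2 / ε) exp (-‖v‖² / 8)` tends to zero faster than any power of `k`.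
-/

open MeasureTheory Filter Real Topology

noncomputable section

/-- Euclidean space `ℝⁿ`. -/
abbrev En (n : ℕ) := EuclideanSpace ℝ (Fin n)

/-- The standard Gaussian measure `dγ = (2π)^{-n/2} e^{-|x|²/2} dx` on `ℝⁿ`. -/
def stdGauss (n : ℕ) : Measure (En n) :=
  (volume : Measure (En n)).withDensity
    (fun x => ENNReal.ofReal ((2 * π) ^ (-(n : ℝ) / 2) * Real.exp (-‖x‖ ^ 2 / 2)))

/-- The probability measure `dμ = f dγ` with density `f` with respect to the Gaussian. -/
def densMeasure {n : ℕ} (f : En n → ℝ) : Measure (En n) :=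
  (stdGauss n).withDensity (fun x => ENNReal.ofReal (f x))

/-- Relative entropy `H(μ) = ∫ f log f dγ` of `dμ = f dγ`. -/
def relEnt {n : ℕ} (f : En n → ℝ) : ℝ :=
  ∫ x, f x * Real.log (f x) ∂(stdGauss n)

/-- Fisher information `I(μ) = ∫ |∇f|²/f dγ` of `dμ = f dγ`. -/
def fisherInfo {n : ℕ} (f : En n → ℝ) : ℝ :=
  ∫ x, ‖gradient f x‖ ^ 2 / f x ∂(stdGauss n)

/-- Deficit of the logarithmic Sobolev inequality, `δ(μ) = I(μ)/2 − H(μ)`. -/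
def lsiDeficit {n : ℕ} (f : En n → ℝ) : ℝ :=
  fisherInfo f / 2 - relEnt f

/-- The `p`-th moment `m_p(μ) = ∫ |x|^p dμ`. -/
def moment {n : ℕ} (p : ℝ) (μ : Measure (En n)) : ℝ := ∫ x, ‖x‖ ^ p ∂μ

/-- A measure is centered if `∫ x dμ = 0`. -/
def IsCentered {n : ℕ} (μ : Measure (En n)) : Prop := (∫ x, x ∂μ) = 0

/-- `π'` is a coupling of `μ` and `ν`. -/
def IsCoupling {n : ℕ} (π' : Measure (En n × En n)) (μ ν : Measure (En n)) : Prop :=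
  IsProbabilityMeasure π' ∧ π'.map Prod.fst = μ ∧ π'.map Prod.snd = ν

/-- Wasserstein distance of order `p`:
`W_p(μ,ν) = inf_π (∫∫ |x−y|^p dπ)^{1/p}` over couplings `π`. -/
def wasserstein {n : ℕ} (p : ℝ) (μ ν : Measure (En n)) : ℝ :=
  ((⨅ (π' : Measure (En n × En n)) (_ : IsCoupling π' μ ν),
      ∫⁻ z, ENNReal.ofReal (‖z.1 - z.2‖ ^ p) ∂π') ^ (1 / p)).toReal

/-- Deficit of Talagrand's inequality, `δ_Tal(μ) = 2H(μ) − W₂²(μ,γ)` for `dμ = f dγ`. -/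
def talDeficit {n : ℕ} (f : En n → ℝ) : ℝ :=
  2 * relEnt f - wasserstein 2 (densMeasure f) (stdGauss n) ^ 2

/-- The `L^p(dμ)` norm of a real function. -/
def LpNorm {n : ℕ} (p : ℝ) (μ : Measure (En n)) (u : En n → ℝ) : ℝ :=
  (∫ x, |u x| ^ p ∂μ) ^ (1 / p)

/-! ### The standard Gaussian measure -/

/-- The Lebesgue density of the standard Gaussian measure. -/
def gaussDens (n : ℕ) (x : En n) : ℝ :=
  (2 * π) ^ (-(n : ℝ) / 2) * Real.exp (-‖x‖ ^ 2 / 2)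

lemma gaussDens_pos (n : ℕ) (x : En n) : 0 < gaussDens n x := by
  unfold gaussDens; positivity

lemma continuous_gaussDens (n : ℕ) : Continuous (gaussDens n) := by
  unfold gaussDens; fun_prop

lemma stdGauss_eq (n : ℕ) : stdGauss n =
    (volume : Measure (En n)).withDensity (fun x => ENNReal.ofReal (gaussDens n x)) := rfl

lemma gauss_integral {n : ℕ} {E : Type*} [NormedAddCommGroup E] [NormedSpace ℝ E]
    (h : En n → E) : ∫ x, h x ∂(stdGauss n) = ∫ x, gaussDens n x • h x := by
  rw [stdGauss_eq, integral_withDensity_eq_integral_toReal_smul]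
  · simp only [ENNReal.toReal_ofReal (gaussDens_pos n _).le]
  · exact (continuous_gaussDens n).measurable.ennreal_ofReal
  · simp

lemma gauss_integrable {n : ℕ} {E : Type*} [NormedAddCommGroup E] [NormedSpace ℝ E]
    (h : En n → E) :
    Integrable h (stdGauss n) ↔ Integrable (fun x => gaussDens n x • h x) := by
  rw [stdGauss_eq, integrable_withDensity_iff_integrable_smul']
  · simp only [ENNReal.toReal_ofReal (gaussDens_pos n _).le]
  · exact (continuous_gaussDens n).measurable.ennreal_ofReal
  · simp

lemma gaussDens_shift {n : ℕ} (v x : En n) :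
    gaussDens n (x - v) = gaussDens n x * Real.exp (inner ℝ v x - ‖v‖ ^ 2 / 2) := by
  unfold gaussDens
  rw [mul_assoc, ← Real.exp_add, norm_sub_sq_real, real_inner_comm]
  congr 2; ring

/-- Cameron–Martin formula: translating the argument by `v` amounts to tilting the Gaussian
by `exp (⟪v, x⟫ - ‖v‖² / 2)`. -/
lemma gauss_shift {n : ℕ} (v : En n) (h : En n → ℝ) :
    ∫ x, h (x + v) ∂(stdGauss n)
      = ∫ x, Real.exp (inner ℝ v x - ‖v‖ ^ 2 / 2) * h x ∂(stdGauss n) := by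
  rw [gauss_integral, gauss_integral,
    ← integral_sub_right_eq_self (fun x => gaussDens n x • h (x + v)) v]
  simp only [gaussDens_shift, sub_add_cancel, smul_eq_mul, mul_assoc]

lemma gauss_shift_integrable {n : ℕ} (v : En n) (h : En n → ℝ) :
    Integrable (fun x => h (x + v)) (stdGauss n) ↔
      Integrable (fun x => Real.exp (inner ℝ v x - ‖v‖ ^ 2 / 2) * h x) (stdGauss n) := by
  rw [gauss_integrable, gauss_integrable]
  constructor
  · intro H
    have := H.comp_sub_right v
    simpa only [gaussDens_shift, sub_add_cancel, smul_eq_mul, mul_assoc] using this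
  · intro H
    have := H.comp_add_right v
    refine this.congr (ae_of_all _ fun x => ?_)
    have h1 := gaussDens_shift v (x + v)
    rw [add_sub_cancel_right] at h1
    simp only [smul_eq_mul, h1, mul_assoc]

lemma gaussDens_neg {n : ℕ} (x : En n) : gaussDens n (-x) = gaussDens n x := by
  simp [gaussDens]

lemma gauss_neg {n : ℕ} {E : Type*} [NormedAddCommGroup E] [NormedSpace ℝ E] (h : En n → E) :
    ∫ x, h (-x) ∂(stdGauss n) = ∫ x, h x ∂(stdGauss n) := by
  rw [gauss_integral, gauss_integral, ← integral_neg_eq_self (fun x => gaussDens n x • h x)]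
  simp only [gaussDens_neg]

lemma gauss_neg_integrable {n : ℕ} {h : En n → ℝ} (H : Integrable h (stdGauss n)) :
    Integrable (fun x => h (-x)) (stdGauss n) := by
  rw [gauss_integrable] at *
  simpa only [gaussDens_neg] using H.comp_neg

lemma integral_gaussDens (n : ℕ) : ∫ x, gaussDens n x = 1 := by
  unfold gaussDens
  rw [integral_const_mul]
  have h := GaussianFourier.integral_rexp_neg_mul_sq_norm (V := En n) (b := 1 / 2) (by norm_num)
  have h2 : ∀ x : En n, -‖x‖ ^ 2 / 2 = -(1 / 2) * ‖x‖ ^ 2 := fun x => by ring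
  simp only [h2, h, finrank_euclideanSpace, Fintype.card_fin]
  rw [show π / (1 / 2) = 2 * π by ring, ← Real.rpow_add (by positivity)]
  rw [show -(n : ℝ) / 2 + n / 2 = 0 by ring, Real.rpow_zero]

instance stdGauss_prob (n : ℕ) : IsProbabilityMeasure (stdGauss n) := by
  have hi : Integrable (gaussDens n) := by
    by_contra h
    have := integral_undef h
    rw [integral_gaussDens] at this
    exact one_ne_zero this
  constructor
  rw [stdGauss_eq, withDensity_apply _ MeasurableSet.univ, Measure.restrict_univ,
    ← ofReal_integral_eq_lintegral_ofReal hi (ae_of_all _ fun x => (gaussDens_pos n x).le),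
    integral_gaussDens, ENNReal.ofReal_one]

lemma gauss_exp_integral {n : ℕ} (v : En n) (c : ℝ) :
    ∫ x, Real.exp (c * inner ℝ v x) ∂(stdGauss n) = Real.exp (c ^ 2 * ‖v‖ ^ 2 / 2) := by
  have h := gauss_shift (c • v) (fun _ => (1 : ℝ))
  simp only [integral_const, smul_eq_mul, mul_one, probReal_univ, Real.exp_sub,
    integral_div] at h
  rw [eq_div_iff (Real.exp_pos _).ne', one_mul] at h
  simp only [real_inner_smul_left] at h
  rw [← h, norm_smul, mul_pow, Real.norm_eq_abs, sq_abs]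

lemma gauss_exp_integrable {n : ℕ} (v : En n) (c : ℝ) :
    Integrable (fun x => Real.exp (c * inner ℝ v x)) (stdGauss n) := by
  by_contra h
  have := integral_undef h
  rw [gauss_exp_integral] at this
  exact (Real.exp_pos _).ne' this

lemma gauss_inner_integrable {n : ℕ} (v : En n) :
    Integrable (fun x => inner ℝ v x) (stdGauss n) := by
  refine ((gauss_exp_integrable v 1).add (gauss_exp_integrable v (-1))).mono'
    (by fun_prop) (ae_of_all _ fun x => ?_)
  simp only [Pi.add_apply, one_mul, neg_one_mul, Real.norm_eq_abs]
  have h1 := Real.add_one_le_exp (inner ℝ v x)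
  have h2 := Real.add_one_le_exp (-inner ℝ v x)
  have h3 := Real.exp_pos (inner ℝ v x)
  have h4 := Real.exp_pos (-inner ℝ v x)
  rw [abs_le]; constructor <;> linarith

lemma gauss_inner_integral {n : ℕ} (v : En n) :
    ∫ x, inner ℝ v x ∂(stdGauss n) = 0 := by
  have h := gauss_neg (n := n) (fun x => inner ℝ v x)
  simp only [inner_neg_right, integral_neg] at h
  linarith

/-! ### The mixture densities -/

/-- The density, with respect to the Gaussian `γ`, of the average of the two translates of `γ`
by `v` and `-v`. -/
def bump {n : ℕ} (v x : En n) : ℝ := Real.exp (-‖v‖ ^ 2 / 2) * Real.cosh (inner ℝ v x)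

/-- The density `1 - ε + ε * bump v` of the mixture which puts mass `1 - ε` on `γ` and
mass `ε / 2` on each of its translates by `±v`. -/
def mix {n : ℕ} (ε : ℝ) (v x : En n) : ℝ := 1 - ε + ε * bump v x

/-- The size of the interaction between `γ` and its translates in the mixture: with
`A = ‖v‖²` it is the Gaussian integral of `overlapFun`, and it is exponentially small in `A`. -/
def overlap (ε A : ℝ) : ℝ := √(2 / ε) * Real.exp (-A / 8)

/-- The square root of the ratio between `γ` and the component `(ε / 2) γ(· - v)` of the mixture,
evaluated at `x + v`. -/
def overlapFun {n : ℕ} (ε : ℝ) (v x : En n) : ℝ :=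
  √(2 / ε) * Real.exp (-‖v‖ ^ 2 / 4) * Real.exp (-(1 / 2) * inner ℝ v x)

section
variable {n : ℕ}

lemma bump_pos (v x : En n) : 0 < bump v x := by
  have := Real.cosh_pos (inner ℝ v x)
  unfold bump; positivity

lemma bump_neg (v x : En n) : bump v (-x) = bump v x := by
  simp [bump, inner_neg_right]

lemma mix_neg (ε : ℝ) (v x : En n) : mix ε v (-x) = mix ε v x := by
  simp [mix, bump_neg]

lemma continuous_bump (v : En n) : Continuous (bump v) := by
  unfold bump; fun_prop

lemma continuous_mix (ε : ℝ) (v : En n) : Continuous (mix ε v) := by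
  have := continuous_bump v
  unfold mix; fun_prop

lemma bump_eq (v x : En n) : bump v x =
    (Real.exp (inner ℝ v x - ‖v‖ ^ 2 / 2) + Real.exp (inner ℝ v (-x) - ‖v‖ ^ 2 / 2)) / 2 := by
  rw [bump, Real.cosh_eq, inner_neg_right, mul_div_assoc', mul_add, ← Real.exp_add,
    ← Real.exp_add]
  congr 3 <;> ring

/-- Integrating an even function against the average of the translates by `±v` is the same as
integrating it against the translate by `v` alone. -/
lemma bump_even {v : En n} {h : En n → ℝ} (he : ∀ x, h (-x) = h x)
    (hi : Integrable (fun x => h (x + v)) (stdGauss n)) :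
    Integrable (fun x => bump v x * h x) (stdGauss n) ∧
      ∫ x, bump v x * h x ∂(stdGauss n) = ∫ x, h (x + v) ∂(stdGauss n) := by
  have h1 := (gauss_shift_integrable v h).1 hi
  have h2 := gauss_neg_integrable h1
  have h3 := gauss_neg (fun x => Real.exp (inner ℝ v x - ‖v‖ ^ 2 / 2) * h x)
  have key : (fun x => bump v x * h x) = fun x =>
      (Real.exp (inner ℝ v x - ‖v‖ ^ 2 / 2) * h x +
        Real.exp (inner ℝ v (-x) - ‖v‖ ^ 2 / 2) * h (-x)) / 2 := by
    funext x; rw [bump_eq, he]; ring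
  rw [key]
  refine ⟨(h1.add h2).div_const 2, ?_⟩
  rw [integral_div, integral_add h1 h2, h3, gauss_shift]
  ring

lemma bump_integrable (v : En n) : Integrable (bump v) (stdGauss n) := by
  simpa using (bump_even (v := v) (h := fun _ => 1) (fun _ => rfl) (integrable_const _)).1

lemma bump_integral (v : En n) : ∫ x, bump v x ∂(stdGauss n) = 1 := by
  simpa using (bump_even (v := v) (h := fun _ => 1) (fun _ => rfl) (integrable_const _)).2

lemma mix_integrable (ε : ℝ) (v : En n) : Integrable (mix ε v) (stdGauss n) :=
  (integrable_const _).add ((bump_integrable v).const_mul ε)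

lemma mix_integral (ε : ℝ) (v : En n) : ∫ x, mix ε v x ∂(stdGauss n) = 1 := by
  unfold mix
  rw [integral_add (integrable_const _) ((bump_integrable v).const_mul ε), integral_const_mul,
    bump_integral]
  simp

lemma mix_ge {ε : ℝ} (h0 : 0 ≤ ε) (v x : En n) : 1 - ε ≤ mix ε v x := by
  have := mul_nonneg h0 (bump_pos v x).le
  unfold mix; linarith

lemma mix_pos {ε : ℝ} (h0 : 0 ≤ ε) (h1 : ε ≤ 1 / 2) (v x : En n) : 0 < mix ε v x :=
  lt_of_lt_of_le (by linarith) (mix_ge h0 v x)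

lemma mix_prob {ε : ℝ} (h0 : 0 ≤ ε) (h1 : ε ≤ 1 / 2) (v : En n) :
    IsProbabilityMeasure (densMeasure (mix ε v)) := by
  constructor
  rw [densMeasure, withDensity_apply _ MeasurableSet.univ, Measure.restrict_univ,
    ← ofReal_integral_eq_lintegral_ofReal (mix_integrable ε v)
      (ae_of_all _ fun x => (mix_pos h0 h1 v x).le), mix_integral, ENNReal.ofReal_one]

lemma mix_centered {ε : ℝ} (h0 : 0 ≤ ε) (h1 : ε ≤ 1 / 2) (v : En n) :
    IsCentered (densMeasure (mix ε v)) := by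
  unfold IsCentered densMeasure
  rw [integral_withDensity_eq_integral_toReal_smul
    (continuous_mix ε v).measurable.ennreal_ofReal (by simp)]
  simp only [ENNReal.toReal_ofReal (mix_pos h0 h1 v _).le]
  have h := gauss_neg (fun x => mix ε v x • x)
  simp only [mix_neg, smul_neg, integral_neg] at h
  have h2 : (2 : ℝ) • ∫ x, mix ε v x • x ∂(stdGauss n) = 0 := by
    rw [two_smul]
    nth_rewrite 1 [← h]
    exact neg_add_cancel _
  exact (smul_eq_zero.1 h2).resolve_left two_ne_zero

/-! ### `L¹` distance to the Gaussian -/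

lemma mix_L1_le {ε : ℝ} (h0 : 0 ≤ ε) (v : En n) :
    ∫ x, |mix ε v x - 1| ∂(stdGauss n) ≤ 2 * ε := by
  have hb := (bump_integrable v).const_mul ε
  calc ∫ x, |mix ε v x - 1| ∂(stdGauss n)
      ≤ ∫ x, (ε * bump v x + ε) ∂(stdGauss n) := by
        refine integral_mono (((mix_integrable ε v).sub (integrable_const 1)).abs)
          (hb.add (integrable_const ε)) fun x => ?_
        have := mul_nonneg h0 (bump_pos v x).le
        simp only [mix, abs_le]
        constructor <;> linarith
    _ = 2 * ε := by
        rw [integral_add hb (integrable_const _), integral_const_mul, bump_integral]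
        simp; ring

/-- A dimensional constant bounding the `L¹` distance from below. -/
def ballConst (n : ℕ) : ℝ := (stdGauss n).real (Metric.ball 0 (1 / 2)) / 2

lemma ballConst_pos (n : ℕ) : 0 < ballConst n := by
  have h : stdGauss n (Metric.ball 0 (1 / 2)) ≠ 0 := by
    rw [stdGauss_eq]
    intro h
    rw [withDensity_apply_eq_zero (continuous_gaussDens n).measurable.ennreal_ofReal] at h
    have : {x : En n | ENNReal.ofReal (gaussDens n x) ≠ 0} = Set.univ := by
      ext x; simp [gaussDens_pos]
    rw [this, Set.univ_inter] at h
    exact (Metric.measure_ball_pos volume (0 : En n) (by norm_num : (0 : ℝ) < 1 / 2)).ne' h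
  have : 0 < (stdGauss n).real (Metric.ball 0 (1 / 2)) :=
    ENNReal.toReal_pos h (measure_ne_top _ _)
  unfold ballConst; positivity

lemma bump_le_half {v x : En n} (hv : 2 ≤ ‖v‖) (hx : ‖x‖ ≤ 1 / 2) : bump v x ≤ 1 / 2 := by
  have h1 : |inner ℝ v x| ≤ ‖v‖ * (1 / 2) :=
    (abs_real_inner_le_norm v x).trans (by gcongr)
  have h2 : Real.cosh (inner ℝ v x) ≤ Real.exp (‖v‖ * (1 / 2)) := by
    rw [← Real.cosh_abs, Real.cosh_eq]
    have a := Real.exp_le_exp.2 h1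
    have b : Real.exp (-|inner ℝ v x|) ≤ Real.exp (|inner ℝ v x|) := by
      apply Real.exp_le_exp.2; linarith [abs_nonneg (inner ℝ v x)]
    linarith
  calc bump v x ≤ Real.exp (-‖v‖ ^ 2 / 2) * Real.exp (‖v‖ * (1 / 2)) := by
        unfold bump; gcongr
    _ = Real.exp (-‖v‖ ^ 2 / 2 + ‖v‖ * (1 / 2)) := (Real.exp_add _ _).symm
    _ ≤ Real.exp (-1) := by apply Real.exp_le_exp.2; nlinarith
    _ ≤ 1 / 2 := by
        rw [Real.exp_neg, one_div]
        apply inv_anti₀ (by norm_num)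
        have := Real.add_one_le_exp 1
        linarith

lemma mix_L1_ge {ε : ℝ} (h0 : 0 ≤ ε) {v : En n} (hv : 2 ≤ ‖v‖) :
    ballConst n * ε ≤ ∫ x, |mix ε v x - 1| ∂(stdGauss n) := by
  have hi : Integrable (fun x => |mix ε v x - 1|) (stdGauss n) :=
    ((mix_integrable ε v).sub (integrable_const 1)).abs
  calc ballConst n * ε = ∫ x in Metric.ball (0 : En n) (1 / 2), ε / 2 ∂(stdGauss n) := by
        rw [setIntegral_const, ballConst, smul_eq_mul]; ring
    _ ≤ ∫ x in Metric.ball (0 : En n) (1 / 2), |mix ε v x - 1| ∂(stdGauss n) := by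
        refine setIntegral_mono_on (integrable_const _) hi.integrableOn
          Metric.isOpen_ball.measurableSet fun x hx => ?_
        have hb := bump_le_half hv (mem_ball_zero_iff.1 hx).le
        rw [abs_sub_comm]
        refine le_trans ?_ (le_abs_self _)
        unfold mix
        nlinarith
    _ ≤ _ := setIntegral_le_integral hi (ae_of_all _ fun x => abs_nonneg _)

/-! ### Comparison of the mixture with one of its components -/

lemma inner_shift (v x : En n) : inner ℝ v (x + v) = inner ℝ v x + ‖v‖ ^ 2 := by
  rw [inner_add_right, real_inner_self_eq_norm_sq]

lemma overlapFun_nonneg (ε : ℝ) (v x : En n) : 0 ≤ overlapFun ε v x := by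
  unfold overlapFun; positivity

lemma overlapFun_integrable (ε : ℝ) (v : En n) :
    Integrable (overlapFun ε v) (stdGauss n) :=
  (gauss_exp_integrable v _).const_mul _

lemma overlapFun_integral (ε : ℝ) (v : En n) :
    ∫ x, overlapFun ε v x ∂(stdGauss n) = overlap ε (‖v‖ ^ 2) := by
  unfold overlapFun overlap
  rw [integral_const_mul, gauss_exp_integral, mul_assoc, ← Real.exp_add]
  congr 2; ring

/-- The weighted translate `(ε / 2) γ(· - v)` of the mixture, as a density evaluated at `x + v`. -/
def compFun (ε : ℝ) (v x : En n) : ℝ := ε / 2 * Real.exp (‖v‖ ^ 2 / 2 + inner ℝ v x)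

lemma compFun_pos {ε : ℝ} (h0 : 0 < ε) (v x : En n) : 0 < compFun ε v x := by
  unfold compFun; positivity

lemma overlapFun_sq {ε : ℝ} (h0 : 0 < ε) (v x : En n) :
    overlapFun ε v x ^ 2 * compFun ε v x = 1 := by
  unfold overlapFun compFun
  rw [mul_pow, mul_pow, Real.sq_sqrt (by positivity), ← Real.exp_nat_mul, ← Real.exp_nat_mul]
  have : Real.exp ((2 : ℕ) * (-‖v‖ ^ 2 / 4)) * Real.exp ((2 : ℕ) * (-(1 / 2) * inner ℝ v x)) *
      Real.exp (‖v‖ ^ 2 / 2 + inner ℝ v x) = 1 := by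
    rw [← Real.exp_add, ← Real.exp_add, Real.exp_eq_one_iff]
    push_cast; ring
  calc _ = (2 / ε * (ε / 2)) * (Real.exp ((2 : ℕ) * (-‖v‖ ^ 2 / 4)) *
      Real.exp ((2 : ℕ) * (-(1 / 2) * inner ℝ v x)) *
      Real.exp (‖v‖ ^ 2 / 2 + inner ℝ v x)) := by ring
    _ = 1 := by rw [this]; field_simp

lemma mix_shift (ε : ℝ) (v x : En n) : mix ε v (x + v) =
    1 - ε + compFun ε v x * (1 + Real.exp (-2 * ‖v‖ ^ 2) * Real.exp (-2 * inner ℝ v x)) := by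
  have h1 : Real.exp (‖v‖ ^ 2 / 2 + inner ℝ v x) *
      (Real.exp (-2 * ‖v‖ ^ 2) * Real.exp (-2 * inner ℝ v x)) =
      Real.exp (-‖v‖ ^ 2 / 2) * Real.exp (-(inner ℝ v x + ‖v‖ ^ 2)) := by
    simp only [← Real.exp_add]; congr 1; ring
  have h2 : Real.exp (‖v‖ ^ 2 / 2 + inner ℝ v x) =
      Real.exp (-‖v‖ ^ 2 / 2) * Real.exp (inner ℝ v x + ‖v‖ ^ 2) := by
    simp only [← Real.exp_add]; congr 1; ring
  unfold mix bump compFun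
  rw [inner_shift, Real.cosh_eq]
  linear_combination (-ε / 2) * h1 - ε / 2 * h2

lemma compFun_le_mix {ε : ℝ} (h0 : 0 < ε) (h1 : ε ≤ 1 / 2) (v x : En n) :
    compFun ε v x ≤ mix ε v (x + v) := by
  rw [mix_shift]
  have := compFun_pos h0 v x
  have h2 : 0 ≤ compFun ε v x * (Real.exp (-2 * ‖v‖ ^ 2) * Real.exp (-2 * inner ℝ v x)) := by
    positivity
  linarith

lemma mix_le_compFun {ε : ℝ} (h0 : 0 < ε) (v x : En n) :
    mix ε v (x + v) ≤ compFun ε v x * Real.exp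
      (Real.exp (-2 * ‖v‖ ^ 2) * Real.exp (-2 * inner ℝ v x) + 2 * overlapFun ε v x) := by
  rw [mix_shift]
  set r := Real.exp (-2 * ‖v‖ ^ 2) * Real.exp (-2 * inner ℝ v x)
  have hr : 0 ≤ r := by positivity
  have hw := overlapFun_nonneg ε v x
  have hsq := overlapFun_sq h0 v x
  have hu := compFun_pos h0 v x
  set w := overlapFun ε v x
  set u := compFun ε v x
  have e1 := Real.add_one_le_exp r
  have e2 := Real.add_one_le_exp w
  calc 1 - ε + u * (1 + r) ≤ u * (1 + r + w ^ 2) := by nlinarith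
    _ ≤ u * ((1 + r) * (1 + w) ^ 2) := by
        gcongr
        nlinarith [mul_nonneg hr hw, mul_nonneg hr (sq_nonneg w)]
    _ ≤ u * (Real.exp r * Real.exp w ^ 2) := by
        gcongr <;> linarith
    _ = _ := by rw [← Real.exp_nat_mul, ← Real.exp_add]; norm_num

lemma ratio_le_overlapFun {ε : ℝ} (h0 : 0 < ε) (h1 : ε ≤ 1 / 2) (v x : En n) :
    (1 - ε) / mix ε v (x + v) ≤ overlapFun ε v x := by
  have hm := mix_pos h0.le h1 v (x + v)
  have hm1 := mix_ge h0.le v (x + v)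
  have hu := compFun_pos h0 v x
  have hw := overlapFun_nonneg ε v x
  have hsq := overlapFun_sq h0 v x
  have hle := compFun_le_mix h0 h1 v x
  rw [div_le_iff₀ hm]
  refine abs_le_of_sq_le_sq' ?_ (by positivity) |>.2
  calc (1 - ε) ^ 2 ≤ mix ε v (x + v) * 1 := by nlinarith
    _ = mix ε v (x + v) * (overlapFun ε v x ^ 2 * compFun ε v x) := by rw [hsq]
    _ ≤ mix ε v (x + v) * (overlapFun ε v x ^ 2 * mix ε v (x + v)) := by gcongr
    _ = _ := by ring

/-! ### Entropy of the mixture -/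

lemma log_mix_integrable {ε : ℝ} (h0 : 0 < ε) (h1 : ε ≤ 1 / 2) (v : En n) :
    Integrable (fun x => Real.log (mix ε v x)) (stdGauss n) := by
  refine ((mix_integrable ε v).add (integrable_const (-Real.log (1 - ε)))).mono'
    ?_ (ae_of_all _ fun x => ?_)
  · exact ((continuous_mix ε v).log fun x => (mix_pos h0.le h1 v x).ne').aestronglyMeasurable
  · have hm := mix_pos h0.le h1 v x
    have a := Real.log_le_sub_one_of_pos hm
    have b := Real.log_le_log (by linarith) (mix_ge h0.le v x)
    have c : Real.log (1 - ε) ≤ 0 := Real.log_nonpos (by linarith) (by linarith)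
    simp only [Pi.add_apply, Real.norm_eq_abs, abs_le]
    constructor <;> linarith

lemma log_compFun {ε : ℝ} (h0 : 0 < ε) (v x : En n) :
    Real.log (compFun ε v x) = Real.log (ε / 2) + ‖v‖ ^ 2 / 2 + inner ℝ v x := by
  unfold compFun
  rw [Real.log_mul (by positivity) (Real.exp_pos _).ne', Real.log_exp]; ring

lemma log_compFun_integrable {ε : ℝ} (h0 : 0 < ε) (v : En n) :
    Integrable (fun x => Real.log (compFun ε v x)) (stdGauss n) := by
  simp only [log_compFun h0]
  exact (integrable_const _).add (gauss_inner_integrable v)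

lemma log_compFun_integral {ε : ℝ} (h0 : 0 < ε) (v : En n) :
    ∫ x, Real.log (compFun ε v x) ∂(stdGauss n) = Real.log (ε / 2) + ‖v‖ ^ 2 / 2 := by
  simp only [log_compFun h0]
  rw [integral_add (integrable_const _) (gauss_inner_integrable v), gauss_inner_integral]
  simp

lemma log_upper_integrable {ε : ℝ} (h0 : 0 < ε) (v : En n) :
    Integrable (fun x => Real.log (compFun ε v x) +
      (Real.exp (-2 * ‖v‖ ^ 2) * Real.exp (-2 * inner ℝ v x) + 2 * overlapFun ε v x))
      (stdGauss n) :=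
  (log_compFun_integrable h0 v).add
    (((gauss_exp_integrable v (-2)).const_mul _).add ((overlapFun_integrable ε v).const_mul 2))

lemma log_mix_shift_le {ε : ℝ} (h0 : 0 < ε) (h1 : ε ≤ 1 / 2) (v x : En n) :
    Real.log (mix ε v (x + v)) ≤ Real.log (compFun ε v x) +
      (Real.exp (-2 * ‖v‖ ^ 2) * Real.exp (-2 * inner ℝ v x) + 2 * overlapFun ε v x) := by
  have := Real.log_le_log (mix_pos h0.le h1 v (x + v)) (mix_le_compFun h0 v x)
  rwa [Real.log_mul (compFun_pos h0 v x).ne' (Real.exp_pos _).ne', Real.log_exp] at this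

lemma log_mix_shift_integrable {ε : ℝ} (h0 : 0 < ε) (h1 : ε ≤ 1 / 2) (v : En n) :
    Integrable (fun x => Real.log (mix ε v (x + v))) (stdGauss n) := by
  refine integrable_of_le_of_le ?_
    (ae_of_all _ fun x => Real.log_le_log (compFun_pos h0 v x) (compFun_le_mix h0 h1 v x))
    (ae_of_all _ fun x => log_mix_shift_le h0 h1 v x)
    (log_compFun_integrable h0 v) (log_upper_integrable h0 v)
  exact (((continuous_mix ε v).comp (by fun_prop : Continuous fun x : En n => x + v)).log
    fun x => (mix_pos h0.le h1 v (x + v)).ne').aestronglyMeasurable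

lemma relEnt_eq {ε : ℝ} (h0 : 0 < ε) (h1 : ε ≤ 1 / 2) (v : En n) :
    relEnt (mix ε v) = (1 - ε) * ∫ x, Real.log (mix ε v x) ∂(stdGauss n) +
      ε * ∫ x, Real.log (mix ε v (x + v)) ∂(stdGauss n) := by
  obtain ⟨hi, he⟩ := bump_even (v := v) (h := fun x => Real.log (mix ε v x))
    (fun x => by rw [mix_neg]) (log_mix_shift_integrable h0 h1 v)
  rw [relEnt, ← he, ← integral_const_mul, ← integral_const_mul,
    ← integral_add ((log_mix_integrable h0 h1 v).const_mul _) (hi.const_mul _)]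
  congr 1; funext x
  conv_lhs => rw [mix]
  simp only [mix]
  ring

lemma relEnt_ge {ε : ℝ} (h0 : 0 < ε) (h1 : ε ≤ 1 / 2) (v : En n) :
    ε * (‖v‖ ^ 2 / 2 + Real.log (ε / 2) - 1) ≤ relEnt (mix ε v) := by
  rw [relEnt_eq h0 h1]
  have a : Real.log (1 - ε) ≤ ∫ x, Real.log (mix ε v x) ∂(stdGauss n) := by
    have := integral_mono (integrable_const (Real.log (1 - ε))) (log_mix_integrable h0 h1 v)
      (fun x => Real.log_le_log (by linarith) (mix_ge h0.le v x))
    simpa using this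
  have b := integral_mono (log_compFun_integrable h0 v) (log_mix_shift_integrable h0 h1 v)
    (fun x => Real.log_le_log (compFun_pos h0 v x) (compFun_le_mix h0 h1 v x))
  rw [log_compFun_integral h0] at b
  -- `y log y ≥ y - 1` at `y = 1 - ε`
  have c : -ε ≤ (1 - ε) * Real.log (1 - ε) := by
    have h3 : 0 < 1 - ε := by linarith
    have := Real.one_sub_inv_le_log_of_pos h3
    have h4 := mul_le_mul_of_nonneg_left this h3.le
    rw [mul_sub, mul_inv_cancel₀ h3.ne'] at h4
    linarith
  have a' := mul_le_mul_of_nonneg_left a (by linarith : 0 ≤ 1 - ε)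
  have b' := mul_le_mul_of_nonneg_left b h0.le
  linarith

lemma relEnt_le {ε : ℝ} (h0 : 0 < ε) (h1 : ε ≤ 1 / 2) (v : En n) :
    relEnt (mix ε v) ≤
      ε * (‖v‖ ^ 2 / 2 + Real.log (ε / 2) + 1 + 2 * overlap ε (‖v‖ ^ 2)) := by
  rw [relEnt_eq h0 h1]
  have a : ∫ x, Real.log (mix ε v x) ∂(stdGauss n) ≤ 0 := by
    have := integral_mono (log_mix_integrable h0 h1 v)
      ((mix_integrable ε v).sub (integrable_const 1))
      (fun x => Real.log_le_sub_one_of_pos (mix_pos h0.le h1 v x))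
    refine this.trans_eq ?_
    simp only [Pi.sub_apply]
    rw [integral_sub (mix_integrable ε v) (integrable_const 1), mix_integral]
    simp
  have b := integral_mono (log_mix_shift_integrable h0 h1 v) (log_upper_integrable h0 v)
    (log_mix_shift_le h0 h1 v)
  have i1 := (gauss_exp_integrable v (-2)).const_mul (Real.exp (-2 * ‖v‖ ^ 2))
  have i2 := (overlapFun_integrable ε v).const_mul 2
  have i3 : Integrable (fun x => Real.exp (-2 * ‖v‖ ^ 2) * Real.exp (-2 * inner ℝ v x) +
      2 * overlapFun ε v x) (stdGauss n) := i1.add i2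
  rw [integral_add (log_compFun_integrable h0 v) i3, integral_add i1 i2, integral_const_mul, integral_const_mul,
    overlapFun_integral, gauss_exp_integral, log_compFun_integral h0, ← Real.exp_add,
    show -2 * ‖v‖ ^ 2 + (-2) ^ 2 * ‖v‖ ^ 2 / 2 = 0 by ring, Real.exp_zero] at b
  have a' := mul_nonpos_of_nonneg_of_nonpos (by linarith : 0 ≤ 1 - ε) a
  have b' := mul_le_mul_of_nonneg_left b h0.le
  linarith

/-! ### Fisher information of the mixture -/

lemma mix_gradient (ε : ℝ) (v x : En n) : gradient (mix ε v) x =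
    (ε * (Real.exp (-‖v‖ ^ 2 / 2) * Real.sinh (inner ℝ v x))) • v := by
  apply HasGradientAt.gradient
  rw [hasGradientAt_iff_hasFDerivAt]
  have h1 : HasFDerivAt (fun x : En n => inner ℝ v x) (innerSL ℝ v) x :=
    (innerSL ℝ v).hasFDerivAt
  have h2 := (((h1.cosh).const_mul (Real.exp (-‖v‖ ^ 2 / 2))).const_mul ε).const_add (1 - ε)
  refine h2.congr_fderiv ?_
  ext y
  simp
  ring

/-- The Fisher integrand of the mixture divided by `ε ‖v‖² bump v`. -/
def fisherRatio (ε : ℝ) (v x : En n) : ℝ :=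
  (1 - 1 / Real.cosh (inner ℝ v x) ^ 2) * (1 - (1 - ε) / mix ε v x)

lemma fisherRatio_eq {ε : ℝ} (h0 : 0 < ε) (h1 : ε ≤ 1 / 2) (v x : En n) :
    ‖gradient (mix ε v) x‖ ^ 2 / mix ε v x =
      ε * ‖v‖ ^ 2 * (bump v x * fisherRatio ε v x) := by
  have hm := mix_pos h0.le h1 v x
  have hc := Real.cosh_pos (inner ℝ v x)
  have hs := Real.cosh_sq (inner ℝ v x)
  have e : 1 - (1 - ε) / mix ε v x = ε * bump v x / mix ε v x := by
    field_simp; unfold mix; ring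
  rw [mix_gradient, norm_smul, mul_pow, Real.norm_eq_abs, sq_abs, fisherRatio, e, bump]
  field_simp
  rw [hs]; ring

lemma fisherRatio_bounds {ε : ℝ} (h0 : 0 < ε) (h1 : ε ≤ 1 / 2) (v x : En n) :
    0 ≤ fisherRatio ε v x ∧ fisherRatio ε v x ≤ 1 := by
  have hm := mix_pos h0.le h1 v x
  have hc := Real.one_le_cosh (inner ℝ v x)
  have a1 : 0 ≤ 1 / Real.cosh (inner ℝ v x) ^ 2 := by positivity
  have a2 : 1 / Real.cosh (inner ℝ v x) ^ 2 ≤ 1 := by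
    rw [div_le_one (by positivity)]; nlinarith
  have b1 : 0 ≤ (1 - ε) / mix ε v x := div_nonneg (by linarith) hm.le
  have b2 : (1 - ε) / mix ε v x ≤ 1 := by
    rw [div_le_one hm]; exact mix_ge h0.le v x
  unfold fisherRatio
  constructor
  · exact mul_nonneg (by linarith) (by linarith)
  · exact mul_le_one₀ (by linarith) (by linarith) (by linarith)

lemma fisherRatio_shift_ge {ε : ℝ} (h0 : 0 < ε) (h1 : ε ≤ 1 / 2) (v x : En n) :
    1 - (2 * Real.exp (-‖v‖ ^ 2) * Real.exp (-1 * inner ℝ v x) + overlapFun ε v x) ≤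
      fisherRatio ε v (x + v) := by
  have hm := mix_pos h0.le h1 v (x + v)
  have hc := Real.one_le_cosh (inner ℝ v (x + v))
  have a1 : 0 ≤ 1 / Real.cosh (inner ℝ v (x + v)) ^ 2 := by positivity
  have b1 : 0 ≤ (1 - ε) / mix ε v (x + v) := div_nonneg (by linarith) hm.le
  have b2 := ratio_le_overlapFun h0 h1 v x
  have a2 : 1 / Real.cosh (inner ℝ v (x + v)) ^ 2 ≤
      2 * Real.exp (-‖v‖ ^ 2) * Real.exp (-1 * inner ℝ v x) := by
    have e : 2 * Real.exp (-‖v‖ ^ 2) * Real.exp (-1 * inner ℝ v x) =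
        2 / Real.exp (inner ℝ v (x + v)) := by
      rw [mul_assoc, ← Real.exp_add, div_eq_mul_inv, ← Real.exp_neg, inner_shift]
      congr 2; ring
    have hle : Real.exp (inner ℝ v (x + v)) ≤ 2 * Real.cosh (inner ℝ v (x + v)) := by
      rw [Real.cosh_eq]
      have := Real.exp_pos (-inner ℝ v (x + v))
      linarith
    rw [e, div_le_div_iff₀ (by positivity) (Real.exp_pos _)]
    nlinarith
  unfold fisherRatio
  nlinarith [mul_nonneg a1 b1]

lemma fisherRatio_continuous {ε : ℝ} (h0 : 0 < ε) (h1 : ε ≤ 1 / 2) (v : En n) :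
    Continuous (fisherRatio ε v) := by
  unfold fisherRatio
  refine Continuous.mul (continuous_const.sub (Continuous.div continuous_const (by fun_prop)
    fun x => by have := Real.cosh_pos (inner ℝ v x); positivity))
    (continuous_const.sub (Continuous.div continuous_const (continuous_mix ε v)
      fun x => (mix_pos h0.le h1 v x).ne'))

lemma fisherRatio_shift_integrable {ε : ℝ} (h0 : 0 < ε) (h1 : ε ≤ 1 / 2) (v : En n) :
    Integrable (fun x => fisherRatio ε v (x + v)) (stdGauss n) := by
  refine (integrable_const (1 : ℝ)).mono' ((fisherRatio_continuous h0 h1 v).comp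
    (by fun_prop : Continuous fun x : En n => x + v)).aestronglyMeasurable
    (ae_of_all _ fun x => ?_)
  have := fisherRatio_bounds h0 h1 v (x + v)
  rw [Real.norm_eq_abs, abs_of_nonneg this.1]
  exact this.2

lemma fisherInfo_eq {ε : ℝ} (h0 : 0 < ε) (h1 : ε ≤ 1 / 2) (v : En n) :
    fisherInfo (mix ε v) =
      ε * ‖v‖ ^ 2 * ∫ x, fisherRatio ε v (x + v) ∂(stdGauss n) := by
  rw [fisherInfo]
  simp only [fisherRatio_eq h0 h1]
  rw [integral_const_mul, (bump_even (v := v) (h := fisherRatio ε v) (fun x => by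
    simp [fisherRatio, mix_neg, inner_neg_right]) (fisherRatio_shift_integrable h0 h1 v)).2]

lemma fisherInfo_le {ε : ℝ} (h0 : 0 < ε) (h1 : ε ≤ 1 / 2) (v : En n) :
    fisherInfo (mix ε v) ≤ ε * ‖v‖ ^ 2 := by
  rw [fisherInfo_eq h0 h1]
  refine mul_le_of_le_one_right (by positivity) ?_
  have := integral_mono (fisherRatio_shift_integrable h0 h1 v) (integrable_const (1 : ℝ))
    (fun x => (fisherRatio_bounds h0 h1 v (x + v)).2)
  simpa using this

lemma fisherInfo_ge {ε : ℝ} (h0 : 0 < ε) (h1 : ε ≤ 1 / 2) (v : En n) :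
    ε * ‖v‖ ^ 2 * (1 - (2 * Real.exp (-‖v‖ ^ 2 / 2) + overlap ε (‖v‖ ^ 2))) ≤
      fisherInfo (mix ε v) := by
  rw [fisherInfo_eq h0 h1]
  have i1 := (gauss_exp_integrable v (-1)).const_mul (2 * Real.exp (-‖v‖ ^ 2))
  have i2 : Integrable (fun x => 2 * Real.exp (-‖v‖ ^ 2) * Real.exp (-1 * inner ℝ v x) +
      overlapFun ε v x) (stdGauss n) := i1.add (overlapFun_integrable ε v)
  have := integral_mono ((integrable_const (1 : ℝ)).sub i2)
    (fisherRatio_shift_integrable h0 h1 v) (fisherRatio_shift_ge h0 h1 v)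
  simp only [Pi.sub_apply] at this
  rw [integral_sub (integrable_const _) i2, integral_add i1 (overlapFun_integrable ε v),
    integral_const_mul, gauss_exp_integral, overlapFun_integral, mul_assoc, ← Real.exp_add,
    show -‖v‖ ^ 2 + (-1) ^ 2 * ‖v‖ ^ 2 / 2 = -‖v‖ ^ 2 / 2 by ring] at this
  simp only [integral_const, probReal_univ, smul_eq_mul, mul_one] at this
  exact mul_le_mul_of_nonneg_left this (by positivity)

end

/-! ### The sequence of examples -/

/-- The mixing weight `(s / 2) k ^ (-t)`, capped at `1 / 2`. It vanishes at `k = 0`, where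
`(0 : ℝ) ^ (-t) = 0`. -/
def wt (s t : ℝ) (k : ℕ) : ℝ := min (1 / 2) (s / 2 * (k : ℝ) ^ (-t))

/-- The translation vector, of length `2 k`. -/
def shiftVec {n : ℕ} (hn : 1 ≤ n) (k : ℕ) : En n := EuclideanSpace.single ⟨0, hn⟩ (2 * (k : ℝ))

/-- The example with parameters `s` and `t`. -/
def exSeq {n : ℕ} (hn : 1 ≤ n) (s t : ℝ) (k : ℕ) : En n → ℝ := mix (wt s t k) (shiftVec hn k)

section
variable {n : ℕ} (hn : 1 ≤ n) {s t : ℝ}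

lemma norm_shiftVec (k : ℕ) : ‖shiftVec hn k‖ = 2 * k := by
  rw [shiftVec, PiLp.norm_single, Real.norm_eq_abs, abs_of_nonneg (by positivity)]

lemma wt_nonneg (hs : 0 < s) (k : ℕ) : 0 ≤ wt s t k := by
  unfold wt; positivity

lemma wt_pos (hs : 0 < s) {k : ℕ} (hk : 1 ≤ k) : 0 < wt s t k := by
  have : (0 : ℝ) < k := by exact_mod_cast hk
  unfold wt; positivity

lemma wt_le (k : ℕ) : wt s t k ≤ 1 / 2 := min_le_left _ _

lemma wt_eventually (ht : 0 < t) : ∀ᶠ k : ℕ in atTop, wt s t k = s / 2 * (k : ℝ) ^ (-t) := by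
  have h : Tendsto (fun k : ℕ => s / 2 * (k : ℝ) ^ (-t)) atTop (𝓝 (s / 2 * 0)) :=
    ((tendsto_rpow_neg_atTop ht).comp tendsto_natCast_atTop_atTop).const_mul _
  rw [mul_zero] at h
  filter_upwards [h.eventually_le_const (by norm_num : (0 : ℝ) < 1 / 2)] with k hk
  exact min_eq_right hk

lemma overlap_eventually (hs : 0 < s) (ht : 0 < t) : ∀ᶠ k : ℕ in atTop,
    (2 * (k : ℝ) ^ 2 + 2) * overlap (wt s t k) (4 * (k : ℝ) ^ 2) ≤ 1 := by
  have h : Tendsto (fun k : ℕ => 4 * √(4 / s) *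
      ((k : ℝ) ^ (2 + t / 2) * Real.exp (-(1 / 2) * (k : ℝ)))) atTop
      (𝓝 (4 * √(4 / s) * 0)) :=
    ((tendsto_rpow_mul_exp_neg_mul_atTop_nhds_zero (2 + t / 2) (1 / 2) (by norm_num)).comp
      tendsto_natCast_atTop_atTop).const_mul _
  rw [mul_zero] at h
  filter_upwards [h.eventually_le_const one_pos, wt_eventually (s := s) ht,
    eventually_ge_atTop 1] with k h1 h2 h3
  refine le_trans ?_ h1
  have hk : (1 : ℝ) ≤ k := by exact_mod_cast h3
  have hk0 : (0 : ℝ) < k := by linarith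
  have e1 : 2 / (s / 2 * (k : ℝ) ^ (-t)) = 4 / s * ((k : ℝ) ^ (t / 2)) ^ 2 := by
    rw [← Real.rpow_natCast, ← Real.rpow_mul hk0.le, Real.rpow_neg hk0.le]
    push_cast
    rw [div_mul_cancel₀ t two_ne_zero]
    have := Real.rpow_pos_of_pos hk0 t
    field_simp; norm_num
  unfold overlap
  rw [h2, e1, Real.sqrt_mul (by positivity), Real.sqrt_sq (by positivity),
    Real.rpow_add hk0, Real.rpow_two]
  calc (2 * (k : ℝ) ^ 2 + 2) * (√(4 / s) * (k : ℝ) ^ (t / 2) * Real.exp (-(4 * (k : ℝ) ^ 2) / 8))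
      ≤ (4 * (k : ℝ) ^ 2) * (√(4 / s) * (k : ℝ) ^ (t / 2) * Real.exp (-(1 / 2) * (k : ℝ))) := by
        gcongr <;> nlinarith
    _ = _ := by ring

/-- Both the deficit and the entropy, divided by the mixing weight `ε`, are known up to `O(1)`:
`δ / ε = t log k + O(1)` and `H / ε = 2 k² - t log k + O(1)`. -/
lemma exSeq_bounds (hs : 0 < s) (ht : 0 < t) : ∃ C : ℝ, ∀ᶠ k : ℕ in atTop,
    |lsiDeficit (exSeq hn s t k) / wt s t k - t * Real.log k| ≤ C ∧
    |relEnt (exSeq hn s t k) / wt s t k - 2 * (k : ℝ) ^ 2 - (-t) * Real.log k| ≤ C := by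
  refine ⟨4 + |Real.log (s / 4)|, ?_⟩
  filter_upwards [overlap_eventually hs ht, wt_eventually (s := s) ht,
    eventually_ge_atTop 1] with k hQ hε hk1
  have hk : (1 : ℝ) ≤ k := by exact_mod_cast hk1
  have hk0 : (0 : ℝ) < k := by linarith
  have h0 : 0 < wt s t k := wt_pos hs hk1
  have h1 : wt s t k ≤ 1 / 2 := wt_le k
  have hlog : Real.log (wt s t k / 2) = Real.log (s / 4) - t * Real.log k := by
    rw [hε, show s / 2 * (k : ℝ) ^ (-t) / 2 = s / 4 * (k : ℝ) ^ (-t) by ring,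
      Real.log_mul (by positivity) (by positivity), Real.log_rpow hk0]
    ring
  have a1 := relEnt_ge h0 h1 (shiftVec hn k)
  have a2 := relEnt_le h0 h1 (shiftVec hn k)
  have b1 := fisherInfo_ge h0 h1 (shiftVec hn k)
  have b2 := fisherInfo_le h0 h1 (shiftVec hn k)
  have hn2 : ‖shiftVec hn k‖ ^ 2 = 4 * (k : ℝ) ^ 2 := by rw [norm_shiftVec]; ring
  rw [hn2, hlog] at a1 a2
  rw [hn2] at b1 b2
  have hQ0 : 0 ≤ overlap (wt s t k) (4 * (k : ℝ) ^ 2) := by unfold overlap; positivity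
  have hE : 4 * (k : ℝ) ^ 2 * Real.exp (-(4 * (k : ℝ) ^ 2) / 2) ≤ 2 := by
    have e : -(4 * (k : ℝ) ^ 2) / 2 = -(2 * (k : ℝ) ^ 2) := by ring
    rw [e, Real.exp_neg, ← div_eq_mul_inv, div_le_iff₀ (Real.exp_pos _)]
    have := Real.add_one_le_exp (2 * (k : ℝ) ^ 2)
    linarith
  unfold lsiDeficit exSeq
  set H := relEnt (mix (wt s t k) (shiftVec hn k))
  set I := fisherInfo (mix (wt s t k) (shiftVec hn k))
  set Q := overlap (wt s t k) (4 * (k : ℝ) ^ 2)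
  set ε := wt s t k
  set X := Real.exp (-(4 * (k : ℝ) ^ 2) / 2)
  have hkQ : 0 ≤ (k : ℝ) ^ 2 * Q := by positivity
  have l1 := neg_abs_le (Real.log (s / 4))
  have l2 := le_abs_self (Real.log (s / 4))
  rw [mul_comm, ← le_div_iff₀ h0] at a1
  rw [mul_comm, ← div_le_iff₀ h0] at a2
  rw [mul_assoc, mul_comm, ← le_div_iff₀ h0] at b1
  rw [mul_comm, ← div_le_iff₀ h0] at b2
  have hd : (I / 2 - H) / ε = I / ε / 2 - H / ε := by ring
  rw [hd, abs_le, abs_le]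
  refine ⟨⟨?_, ?_⟩, ?_, ?_⟩ <;> linarith

lemma tendsto_div_log {u : ℕ → ℝ} {c C : ℝ}
    (h : ∀ᶠ k : ℕ in atTop, |u k - c * Real.log k| ≤ C) :
    Tendsto (fun k : ℕ => u k / Real.log k) atTop (𝓝 c) := by
  have hlog : Tendsto (fun k : ℕ => Real.log (k : ℝ)) atTop atTop :=
    Real.tendsto_log_atTop.comp tendsto_natCast_atTop_atTop
  rw [tendsto_iff_norm_sub_tendsto_zero]
  refine squeeze_zero' (Eventually.of_forall fun _ => norm_nonneg _) ?_
    (hlog.const_div_atTop C)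
  filter_upwards [h, hlog.eventually_gt_atTop 0] with k h1 h2
  rw [div_sub' h2.ne', norm_div, Real.norm_eq_abs, Real.norm_eq_abs, abs_of_pos h2,
    mul_comm (Real.log (k : ℝ)) c]
  gcongr

lemma exSeq_deficit (hs : 0 < s) (ht : 0 < t) :
    Tendsto (fun k : ℕ => (k : ℝ) ^ t * lsiDeficit (exSeq hn s t k) / Real.log k)
      atTop (𝓝 (s * t / 2)) := by
  obtain ⟨C, hC⟩ := exSeq_bounds hn hs ht
  have h := (tendsto_div_log (hC.mono fun k hk => hk.1)).const_mul (s / 2)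
  rw [show s / 2 * t = s * t / 2 by ring] at h
  refine h.congr' ?_
  filter_upwards [wt_eventually (s := s) ht, eventually_ge_atTop 1] with k hε hk1
  have hk0 : (0 : ℝ) < k := by exact_mod_cast hk1
  have := Real.rpow_pos_of_pos hk0 t
  rw [hε, Real.rpow_neg hk0.le]
  field_simp

lemma exSeq_relEnt (hs : 0 < s) (ht : 0 < t) :
    Tendsto (fun k : ℕ =>
      (k : ℝ) ^ t * (relEnt (exSeq hn s t k) - s * (k : ℝ) ^ (2 - t)) / Real.log k)
      atTop (𝓝 (-(s * t / 2))) := by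
  obtain ⟨C, hC⟩ := exSeq_bounds hn hs ht
  have h := (tendsto_div_log (hC.mono fun k hk => hk.2)).const_mul (s / 2)
  rw [show s / 2 * -t = -(s * t / 2) by ring] at h
  refine h.congr' ?_
  filter_upwards [wt_eventually (s := s) ht, eventually_ge_atTop 1] with k hε hk1
  have hk0 : (0 : ℝ) < k := by exact_mod_cast hk1
  have := Real.rpow_pos_of_pos hk0 t
  rw [hε, Real.rpow_neg hk0.le, Real.rpow_sub hk0, Real.rpow_two]
  field_simp

lemma exSeq_L1_le (hs : 0 < s) (k : ℕ) :
    ∫ x, |exSeq hn s t k x - 1| ∂(stdGauss n) ≤ s * (k : ℝ) ^ (-t) := by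
  refine (mix_L1_le (wt_nonneg hs k) (shiftVec hn k)).trans ?_
  have : wt s t k ≤ s / 2 * (k : ℝ) ^ (-t) := min_le_right _ _
  linarith

lemma exSeq_L1_ge (hs : 0 < s) {k : ℕ} (hk : 1 ≤ k) :
    ballConst n * wt s t k ≤ ∫ x, |exSeq hn s t k x - 1| ∂(stdGauss n) := by
  refine mix_L1_ge (wt_nonneg hs k) ?_
  rw [norm_shiftVec]
  have : (1 : ℝ) ≤ k := by exact_mod_cast hk
  linarith

lemma exSeq_L1_pos (hs : 0 < s) {k : ℕ} (hk : 1 ≤ k) :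
    0 < ∫ x, |exSeq hn s t k x - 1| ∂(stdGauss n) :=
  (mul_pos (ballConst_pos n) (wt_pos hs hk)).trans_le (exSeq_L1_ge hn hs hk)

lemma tendsto_log_mul_rpow {r : ℝ} (hr : 0 < r) :
    Tendsto (fun k : ℕ => Real.log (k : ℝ) * (k : ℝ) ^ (-r)) atTop (𝓝 0) := by
  have h := ((isLittleO_log_rpow_atTop hr).tendsto_div_nhds_zero).comp
    (tendsto_natCast_atTop_atTop (R := ℝ))
  refine h.congr fun k => ?_
  simp only [Function.comp_apply]
  rw [Real.rpow_neg (Nat.cast_nonneg k), div_eq_mul_inv]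

/-- With `s = t = 1`, the deficit is of order `log k / k` and the `L¹` distance of order `1 / k`,
so the deficit is negligible against any power `α < 1` of the distance. -/
lemma exSeq_ratio {α : ℝ} (hα0 : 0 < α) (hα1 : α < 1) :
    Tendsto (fun k : ℕ => lsiDeficit (exSeq hn 1 1 k) /
      (∫ x, |exSeq hn 1 1 k x - 1| ∂(stdGauss n)) ^ α) atTop (𝓝 0) := by
  have hc := ballConst_pos n
  have h1 := (exSeq_deficit hn one_pos one_pos).abs.mul
    ((tendsto_log_mul_rpow (sub_pos.2 hα1)).mul_const (((ballConst n / 2) ^ α)⁻¹))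
  rw [zero_mul, mul_zero] at h1
  refine squeeze_zero_norm' ?_ h1
  filter_upwards [wt_eventually (s := 1) one_pos, eventually_ge_atTop 2] with k hε hk
  have hk1 : (1 : ℝ) < k := by exact_mod_cast hk
  have hk0 : (0 : ℝ) < k := by linarith
  have hl : 0 < Real.log k := Real.log_pos hk1
  have hL := exSeq_L1_ge hn (s := 1) (t := 1) one_pos (by omega : 1 ≤ k)
  have hLp := exSeq_L1_pos hn (s := 1) (t := 1) one_pos (by omega : 1 ≤ k)
  rw [hε] at hL
  set L := ∫ x, |exSeq hn 1 1 k x - 1| ∂(stdGauss n)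
  set D := lsiDeficit (exSeq hn 1 1 k)
  have hp : (ballConst n / 2) ^ α * (k : ℝ) ^ (-α) ≤ L ^ α := by
    have e : ballConst n * (1 / 2 * (k : ℝ) ^ (-(1 : ℝ))) =
      ballConst n / 2 * (k : ℝ) ^ (-(1 : ℝ)) := by ring
    rw [e] at hL
    have := Real.rpow_le_rpow (by positivity) hL hα0.le
    rwa [Real.mul_rpow (by positivity) (by positivity), ← Real.rpow_mul hk0.le,
      neg_one_mul] at this
  have hka := Real.rpow_pos_of_pos hk0 α
  have hba : 0 < (ballConst n / 2) ^ α := by positivity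
  calc ‖D / L ^ α‖ = |D| / L ^ α := by
        rw [norm_div, Real.norm_eq_abs, Real.norm_eq_abs,
          abs_of_pos (Real.rpow_pos_of_pos hLp α)]
    _ ≤ |D| / ((ballConst n / 2) ^ α * (k : ℝ) ^ (-α)) := by gcongr
    _ = _ := by
        rw [Real.rpow_one, abs_div, abs_mul, abs_of_pos hk0, abs_of_pos hl, neg_sub,
          Real.rpow_sub hk0, Real.rpow_one, Real.rpow_neg hk0.le]
        field_simp

end

/-- Sharpness considerations for `L¹(dγ)`-stability of the LSI: the deficit can vanish
faster than any power `α < 1` of the `L¹` distance; moreover for the main example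
`‖f_k − 1‖_{L¹(dγ)} = O(k^{-t})`. -/
theorem lsi_L1_sharp_exponent (n : ℕ) (hn : 1 ≤ n) (α : ℝ) (hα0 : 0 < α) (hα1 : α < 1) :
    (∃ f : ℕ → En n → ℝ,
      (∀ k x, 0 ≤ f k x) ∧
      (∀ k, IsProbabilityMeasure (densMeasure (f k))) ∧
      (∀ k, IsCentered (densMeasure (f k))) ∧
      Tendsto (fun k => lsiDeficit (f k)) atTop (𝓝 0) ∧
      Tendsto (fun k => ∫ x, |f k x - 1| ∂(stdGauss n)) atTop (𝓝 0) ∧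
      (∀ k, 0 < ∫ x, |f k x - 1| ∂(stdGauss n)) ∧
      Tendsto (fun k => lsiDeficit (f k) / (∫ x, |f k x - 1| ∂(stdGauss n)) ^ α)
        atTop (𝓝 0)) ∧
    (∀ s t : ℝ, 0 < s → 0 < t →
      ∃ f : ℕ → En n → ℝ,
        (∀ k x, 0 ≤ f k x) ∧
        (∀ k, IsProbabilityMeasure (densMeasure (f k))) ∧
        (∀ k, IsCentered (densMeasure (f k))) ∧
        Tendsto (fun k : ℕ => (k : ℝ) ^ t * lsiDeficit (f k) / Real.log k)
          atTop (𝓝 (s * t / 2)) ∧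
        Tendsto (fun k : ℕ =>
            (k : ℝ) ^ t * (relEnt (f k) - s * (k : ℝ) ^ (2 - t)) / Real.log k)
          atTop (𝓝 (-(s * t / 2))) ∧
        ∃ C : ℝ, 0 < C ∧ ∀ᶠ k : ℕ in atTop,
          (∫ x, |f k x - 1| ∂(stdGauss n)) ≤ C * (k : ℝ) ^ (-t)) := by
  refine ⟨⟨fun k => exSeq hn 1 1 (k + 1), fun k x => ?_, fun k => ?_, fun k => ?_, ?_, ?_,
    fun k => ?_, ?_⟩, fun s t hs ht => ⟨exSeq hn s t, fun k x => ?_, fun k => ?_, fun k => ?_,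
    exSeq_deficit hn hs ht, exSeq_relEnt hn hs ht, s, hs, ?_⟩⟩
  · exact (mix_pos (wt_nonneg one_pos _) (wt_le _) _ x).le
  · exact mix_prob (wt_nonneg one_pos _) (wt_le _) _
  · exact mix_centered (wt_nonneg one_pos _) (wt_le _) _
  · refine (tendsto_add_atTop_iff_nat (f := fun k => lsiDeficit (exSeq hn 1 1 k)) 1).2 ?_
    have h := (exSeq_deficit hn one_pos one_pos).mul (tendsto_log_mul_rpow one_pos)
    rw [mul_zero] at h
    refine h.congr' ?_
    filter_upwards [eventually_ge_atTop 2] with k hk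
    have hk1 : (1 : ℝ) < k := by exact_mod_cast hk
    have hl : 0 < Real.log k := Real.log_pos hk1
    rw [Real.rpow_neg_one, Real.rpow_one]
    field_simp
  · refine (tendsto_add_atTop_iff_nat
      (f := fun k => ∫ x, |exSeq hn 1 1 k x - 1| ∂(stdGauss n)) 1).2 ?_
    have h := ((tendsto_rpow_neg_atTop (one_pos (α := ℝ))).comp
      (tendsto_natCast_atTop_atTop (R := ℝ))).const_mul (1 : ℝ)
    rw [mul_zero] at h
    exact squeeze_zero (fun k => integral_nonneg fun x => abs_nonneg _)
      (fun k => exSeq_L1_le hn one_pos k) h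
  · exact exSeq_L1_pos hn one_pos (Nat.le_add_left 1 k)
  · exact (tendsto_add_atTop_iff_nat (f := fun k => lsiDeficit (exSeq hn 1 1 k) /
      (∫ x, |exSeq hn 1 1 k x - 1| ∂(stdGauss n)) ^ α) 1).2 (exSeq_ratio hn hα0 hα1)
  · exact (mix_pos (wt_nonneg hs _) (wt_le _) _ x).le
  · exact mix_prob (wt_nonneg hs _) (wt_le _) _
  · exact mix_centered (wt_nonneg hs _) (wt_le _) _
  · exact Eventually.of_forall fun k => exSeq_L1_le hn hs k
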